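/- Define the inductive type T of trees by: T has a constructor leaf : T, and a constructor node : Bool → T → Bool → T → T. Call a tree admissible if at every node the two Boolean labels are not both false. Define an equivalence relation ≈ on T as the smallest relation such that leaf ≈ leaf, node b₁ t₁ b₂ t₂ ≈ node b₁' t₁' b₂' t₂' whenever b₁ = b₁', b₂ = b₂', t₁ ≈ t₁', t₂ ≈ t₂' (congruence), and node b₁ t₁ b₂ t₂ ≈ node b₂ t₂ b₁ t₁ (swap), closed under transitivity. Let the saddle number s(t) of a tree be its number of node constructors. Then for every k : ℕ, the set of ≈-equivalence classes of admissible trees t with s(t) = k is finite, and its cardinality equals K k, where K : ℕ → ℕ is defined by K 0 = 1, K (2n) = 3 * ∑_{i=0}^{n-1} K i * K (2n-1-i) for n ≥ 1, and 2 * K (2n+1) = 6 * ∑_{i=0}^{n-1} K i * K (2n-i) + 3 * (K n)^2 + K n for n ≥ 0. -/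

import Mathlib

/-!
The classes of trees form a type `Q` in which every element is either the class of `leaf` or the
class of a node determined by an *unordered* pair of labelled classes: the map `root`, which reads
off this unordered pair, is invariant under `TEquiv`, and `mkNode` is its inverse on nodes.
Hence the set `S (k + 1)` of admissible classes with `k + 1` saddles is the injective image of the
unordered pairs underlying the symmetric set of ordered pairs `pairs k` (labels not both `false`,
saddle numbers adding up to `k`).

A symmetric finite set of ordered pairs satisfies `2 * #unordered = #ordered + #diagonal`
(`two_mul_card_image_sym2`). With `c i` the number of admissible classes with `i` saddles, there are
`3 * ∑_{i + j = k} c i * c j` ordered pairs, the factor `3` counting the labels, and the diagonal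
has `c n` elements if `k = 2 * n` (both labels are `true`) and is empty if `k` is odd. Folding the
symmetric sum over `i + j = k` at its middle turns this into the recursion for `K`.
-/

/-- Trees modeling rooted oriented Reeb graphs: a tree is either a leaf (a single
edge) or a node (a root saddle) with two Boolean-labelled subtrees (the labels
record whether the edge to the subtree is directed up). -/
inductive T : Type
  | leaf : T
  | node : Bool → T → Bool → T → T

/-- A tree is admissible if at every node the two Boolean labels are not both
`false`. -/
def Admissible : T → Prop
  | T.leaf => True
  | T.node b₁ t₁ b₂ t₂ => ¬(b₁ = false ∧ b₂ = false) ∧ Admissible t₁ ∧ Admissible t₂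

/-- The smallest relation on trees containing `leaf ≈ leaf`, closed under
congruence, under swapping the two (label, subtree) pairs at the root, and
under transitivity. -/
inductive TEquiv : T → T → Prop
  | leaf : TEquiv T.leaf T.leaf
  | node {t₁ t₁' t₂ t₂' : T} (b₁ b₂ : Bool) :
      TEquiv t₁ t₁' → TEquiv t₂ t₂' →
      TEquiv (T.node b₁ t₁ b₂ t₂) (T.node b₁ t₁' b₂ t₂')
  | swap (b₁ : Bool) (t₁ : T) (b₂ : Bool) (t₂ : T) :
      TEquiv (T.node b₁ t₁ b₂ t₂) (T.node b₂ t₂ b₁ t₁)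
  | trans {t₁ t₂ t₃ : T} : TEquiv t₁ t₂ → TEquiv t₂ t₃ → TEquiv t₁ t₃

/-- The saddle number of a tree: its number of `node` constructors. -/
def saddles : T → ℕ
  | T.leaf => 0
  | T.node _ t₁ _ t₂ => saddles t₁ + saddles t₂ + 1

/-! ### Counting unordered pairs -/

open Finset in
/-- Orbit counting for the swap on ordered pairs: an off-diagonal unordered pair has two
representatives, a diagonal one has a single representative. -/
lemma two_mul_card_image_sym2 {α : Type*} [DecidableEq α] (P : Finset (α × α))
    (hP : ∀ a b, (a, b) ∈ P → (b, a) ∈ P) :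
    2 * #(P.image (fun p => s(p.1, p.2))) = #P + #(P.filter (fun p => p.1 = p.2)) := by
  rw [card_eq_sum_card_image (fun p : α × α => s(p.1, p.2)) P,
    card_eq_sum_card_fiberwise (f := fun p : α × α => s(p.1, p.2))
      (s := P.filter (fun p => p.1 = p.2)) (t := P.image (fun p => s(p.1, p.2)))
      (fun p hp => mem_coe.2 (mem_image_of_mem _ (mem_filter.1 (mem_coe.1 hp)).1)),
    ← sum_add_distrib, mul_comm, ← smul_eq_mul, ← sum_const]
  refine sum_congr rfl fun z hz => ?_
  obtain ⟨⟨a, b⟩, hab, rfl⟩ := mem_image.1 hz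
  have hba := hP a b hab
  by_cases h : a = b
  · subst h
    have h1 : P.filter (fun p => s(p.1, p.2) = s(a, a)) = {(a, a)} := by
      ext ⟨x, y⟩
      simp only [mem_filter, mem_singleton, Sym2.eq_iff, Prod.mk.injEq]
      grind
    have h2 : (P.filter (fun p => p.1 = p.2)).filter (fun p => s(p.1, p.2) = s(a, a))
        = {(a, a)} := by
      ext ⟨x, y⟩
      simp only [mem_filter, mem_singleton, Sym2.eq_iff, Prod.mk.injEq]
      grind
    simp only [h1, h2, card_singleton]
  · have h1 : P.filter (fun p => s(p.1, p.2) = s(a, b)) = {(a, b), (b, a)} := by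
      ext ⟨x, y⟩
      simp only [mem_filter, mem_insert, mem_singleton, Sym2.eq_iff, Prod.mk.injEq]
      grind
    have h2 : (P.filter (fun p => p.1 = p.2)).filter (fun p => s(p.1, p.2) = s(a, b)) = ∅ := by
      ext ⟨x, y⟩
      simp only [mem_filter, notMem_empty, Sym2.eq_iff]
      grind
    simp only [h1, h2, card_empty, card_pair (show (a, b) ≠ (b, a) by grind)]

/-! ### The type of classes and its root decomposition -/

lemma TEquiv.refl : ∀ t, TEquiv t t
  | T.leaf => TEquiv.leaf
  | T.node _ t₁ _ t₂ => TEquiv.node _ _ (TEquiv.refl t₁) (TEquiv.refl t₂)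

lemma TEquiv.symm {t u : T} (h : TEquiv t u) : TEquiv u t := by
  induction h with
  | leaf => exact TEquiv.leaf
  | node b₁ b₂ _ _ h₁ h₂ => exact TEquiv.node b₁ b₂ h₁ h₂
  | swap b₁ t₁ b₂ t₂ => exact TEquiv.swap b₂ t₂ b₁ t₁
  | trans _ _ h₁ h₂ => exact h₂.trans h₁

instance treeSetoid : Setoid T := ⟨TEquiv, TEquiv.refl, TEquiv.symm, TEquiv.trans⟩

/-- The type of all `TEquiv`-classes of trees, admissible or not. -/
abbrev Q : Type := Quotient treeSetoid

lemma TEquiv.saddles_eq {t u : T} (h : TEquiv t u) : saddles t = saddles u := by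
  induction h <;> simp_all [saddles, Nat.add_comm]

lemma TEquiv.admissible_eq {t u : T} (h : TEquiv t u) : Admissible t = Admissible u := by
  induction h with
  | leaf => rfl
  | node b₁ b₂ _ _ h₁ h₂ => simp only [Admissible, h₁, h₂]
  | swap b₁ t₁ b₂ t₂ => simp only [Admissible]; exact propext (by tauto)
  | trans _ _ h₁ h₂ => exact h₁.trans h₂

/-- The saddle number of a class. -/
def qsaddles : Q → ℕ := Quotient.lift saddles fun _ _ h => TEquiv.saddles_eq h

/-- Admissibility of a class. -/
def QAdm : Q → Prop := Quotient.lift Admissible fun _ _ h => TEquiv.admissible_eq h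

/-- The unordered pair of labelled subtree classes at the root, or `none` for a leaf. -/
def treeRoot : T → Option (Sym2 (Bool × Q))
  | T.leaf => none
  | T.node b₁ t₁ b₂ t₂ => some s((b₁, ⟦t₁⟧), (b₂, ⟦t₂⟧))

/-- `treeRoot` is an invariant, which is what inverts `TEquiv` on nodes. -/
lemma TEquiv.treeRoot_eq {t u : T} (h : TEquiv t u) : treeRoot t = treeRoot u := by
  induction h with
  | leaf => rfl
  | node b₁ b₂ h₁ h₂ =>
    have e₁ : (⟦_⟧ : Q) = ⟦_⟧ := Quotient.sound h₁
    have e₂ : (⟦_⟧ : Q) = ⟦_⟧ := Quotient.sound h₂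
    simp only [treeRoot, e₁, e₂]
  | swap b₁ t₁ b₂ t₂ => exact congrArg some Sym2.eq_swap
  | trans _ _ h₁ h₂ => exact h₁.trans h₂

/-- `treeRoot` on classes. -/
def root : Q → Option (Sym2 (Bool × Q)) :=
  Quotient.lift treeRoot fun _ _ h => TEquiv.treeRoot_eq h

/-- The class of the node with the given ordered pair of labelled subtree classes. -/
def node₂ (p q : Bool × Q) : Q :=
  Quotient.map₂ (fun t u => T.node p.1 t q.1 u) (fun _ _ h _ _ h' => TEquiv.node _ _ h h') p.2 q.2

lemma node₂_comm (p q : Bool × Q) : node₂ p q = node₂ q p := by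
  obtain ⟨b₁, ⟨t₁⟩⟩ := p
  obtain ⟨b₂, ⟨t₂⟩⟩ := q
  exact Quotient.sound (TEquiv.swap b₁ t₁ b₂ t₂)

/-- The class of the node with the given unordered pair of labelled subtree classes. -/
def mkNode : Sym2 (Bool × Q) → Q := Sym2.lift ⟨node₂, node₂_comm⟩

lemma root_mkNode (z : Sym2 (Bool × Q)) : root (mkNode z) = some z := by
  induction z with
  | _ p q =>
    obtain ⟨b₁, ⟨t₁⟩⟩ := p
    obtain ⟨b₂, ⟨t₂⟩⟩ := q
    rfl

lemma mkNode_injective : Function.Injective mkNode := fun z w h =>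
  Option.some.inj (by rw [← root_mkNode z, h, root_mkNode w])

/-! ### Admissible classes by saddle number -/

/-- The set of admissible classes with `k` saddles. -/
def S (k : ℕ) : Set Q := {q | QAdm q ∧ qsaddles q = k}

/-- The ordered pairs of labelled classes that can be attached to the root of an admissible tree
with `k + 1` saddles. -/
def pairs (k : ℕ) : Set ((Bool × Q) × (Bool × Q)) :=
  {p | ¬(p.1.1 = false ∧ p.2.1 = false) ∧ QAdm p.1.2 ∧ QAdm p.2.2 ∧
    qsaddles p.1.2 + qsaddles p.2.2 = k}

lemma S_zero : S 0 = {⟦T.leaf⟧} := by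
  ext q
  induction q using Quotient.inductionOn with
  | _ t =>
    cases t with
    | leaf => exact iff_of_true ⟨trivial, rfl⟩ rfl
    | node b₁ t₁ b₂ t₂ =>
      refine iff_of_false (fun h => Nat.succ_ne_zero _ h.2) fun h => ?_
      exact Option.some_ne_none _ (congrArg root h)

lemma S_succ (k : ℕ) : S (k + 1) = mkNode '' ((fun p => s(p.1, p.2)) '' pairs k) := by
  ext q
  constructor
  · induction q using Quotient.inductionOn with
    | _ t =>
      cases t with
      | leaf => exact fun h => absurd h.2.symm (Nat.succ_ne_zero _)
      | node b₁ t₁ b₂ t₂ =>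
        rintro ⟨⟨h₁, h₂, h₃⟩, h₄⟩
        exact ⟨_, ⟨((b₁, ⟦t₁⟧), (b₂, ⟦t₂⟧)), ⟨h₁, h₂, h₃, Nat.succ.inj h₄⟩, rfl⟩, rfl⟩
  · rintro ⟨_, ⟨⟨⟨b₁, ⟨t₁⟩⟩, ⟨b₂, ⟨t₂⟩⟩⟩, ⟨h₁, h₂, h₃, h₄⟩, rfl⟩, rfl⟩
    exact ⟨⟨h₁, h₂, h₃⟩, congrArg Nat.succ h₄⟩

lemma pairs_finite (k : ℕ) (h : ∀ i ≤ k, (S i).Finite) : (pairs k).Finite := by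
  have hU : (⋃ i ∈ Set.Iic k, S i).Finite := (Set.finite_Iic k).biUnion h
  refine ((Set.finite_univ.prod hU).prod (Set.finite_univ.prod hU)).subset ?_
  rintro ⟨⟨a, x⟩, b, y⟩ ⟨-, hx, hy, hk⟩
  simp only [Set.mem_prod, Set.mem_univ, true_and, Set.mem_iUnion]
  dsimp only at hk hx hy
  exact ⟨⟨_, Set.mem_Iic.2 (by omega), hx, rfl⟩, ⟨_, Set.mem_Iic.2 (by omega), hy, rfl⟩⟩

lemma S_finite (k : ℕ) : (S k).Finite := by
  induction k using Nat.strong_induction_on with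
  | _ k ih =>
    cases k with
    | zero => rw [S_zero]; exact Set.finite_singleton _
    | succ k =>
      rw [S_succ]
      exact ((pairs_finite k fun i hi => ih i (Nat.lt_succ_of_le hi)).image _).image _

/-! ### Cardinalities -/

noncomputable section

open Finset Classical

/-- `S k` as a finset. -/
def F (k : ℕ) : Finset Q := (S_finite k).toFinset

/-- `pairs k` as a finset. -/
def P (k : ℕ) : Finset ((Bool × Q) × (Bool × Q)) :=
  (pairs_finite k fun i _ => S_finite i).toFinset

lemma mem_F {k : ℕ} {q : Q} : q ∈ F k ↔ QAdm q ∧ qsaddles q = k := by simp [F, S]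

lemma mem_P {k : ℕ} {a b : Bool} {x y : Q} : ((a, x), (b, y)) ∈ P k ↔
    ¬(a = false ∧ b = false) ∧ QAdm x ∧ QAdm y ∧ qsaddles x + qsaddles y = k := by
  simp only [P, Set.Finite.mem_toFinset, pairs, Set.mem_ofPred_eq]

lemma card_P (k : ℕ) :
    #(P k) = 3 * ∑ ij ∈ HasAntidiagonal.antidiagonal k, #(F ij.1) * #(F ij.2) := by
  -- Separating labels from classes exhibits `P k` as a product.
  have h : P k = ((({(true, true), (true, false), (false, true)} : Finset (Bool × Bool)) ×ˢ
      (Finset.HasAntidiagonal.antidiagonal k).biUnion fun ij => F ij.1 ×ˢ F ij.2).map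
        (Equiv.prodProdProdComm Bool Bool Q Q).toEmbedding) := by
    ext ⟨⟨a, x⟩, b, y⟩
    simp only [mem_map_equiv, Equiv.prodProdProdComm_symm, Equiv.prodProdProdComm_apply,
      mem_product, mem_P, mem_biUnion, Finset.HasAntidiagonal.mem_antidiagonal, mem_F]
    cases a <;> cases b <;> simp <;> grind
  rw [h, card_map, card_product, card_biUnion]
  · simp only [card_product]; rfl
  · rintro ⟨i, j⟩ - ⟨i', j'⟩ - hne
    rw [Function.onFun, disjoint_left]
    rintro ⟨x, y⟩ h₁ h₂
    simp only [mem_product, mem_F] at h₁ h₂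
    exact hne (by rw [← h₁.1.2, ← h₁.2.2, h₂.1.2, h₂.2.2])

/-- Two equal labels that are not both `false` are both `true`. -/
lemma card_diag_even (n : ℕ) : #((P (2 * n)).filter fun p => p.1 = p.2) = #(F n) := by
  have h : ((P (2 * n)).filter fun p => p.1 = p.2) =
      (F n).image fun q => ((true, q), (true, q)) := by
    ext ⟨⟨a, x⟩, b, y⟩
    simp only [mem_filter, mem_P, mem_image, mem_F, Prod.mk.injEq]
    constructor
    · rintro ⟨⟨h₁, h₂, h₃, h₄⟩, rfl, rfl⟩
      exact ⟨x, ⟨h₂, by omega⟩, by simpa using h₁⟩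
    · rintro ⟨q, ⟨h₁, h₂⟩, ⟨rfl, rfl⟩, rfl, rfl⟩
      exact ⟨⟨by simp, h₁, h₁, by omega⟩, rfl, rfl⟩
  rw [h, card_image_of_injective]
  intro x y hxy
  exact (Prod.mk.inj (Prod.mk.inj hxy).1).2

lemma card_diag_odd (n : ℕ) : #((P (2 * n + 1)).filter fun p => p.1 = p.2) = 0 := by
  rw [card_eq_zero, filter_eq_empty_iff]
  rintro ⟨⟨a, x⟩, b, y⟩ h hxy
  obtain ⟨rfl, rfl⟩ := Prod.mk.inj hxy
  have := (mem_P.1 h).2.2.2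
  omega

lemma two_mul_card_F_succ (k : ℕ) : 2 * #(F (k + 1)) =
    3 * ∑ ij ∈ HasAntidiagonal.antidiagonal k, #(F ij.1) * #(F ij.2) +
      #((P k).filter fun p => p.1 = p.2) := by
  have h : F (k + 1) = ((P k).image fun p => s(p.1, p.2)).image mkNode := by
    apply coe_injective
    simp [F, P, S_succ]
  rw [h, card_image_of_injective _ mkNode_injective, two_mul_card_image_sym2, card_P]
  rintro ⟨a, x⟩ ⟨b, y⟩ hp
  rw [mem_P] at hp ⊢
  exact ⟨by tauto, hp.2.2.1, hp.2.1, by omega⟩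

end

/-! ### The recursion -/

/-- Folding a convolution at its middle, with an even number of terms. -/
lemma sum_fold_odd (f : ℕ → ℕ) (n : ℕ) :
    ∑ ij ∈ Finset.HasAntidiagonal.antidiagonal (2 * n + 1), f ij.1 * f ij.2 =
      2 * ∑ i ∈ Finset.range (n + 1), f i * f (2 * n + 1 - i) := by
  have hr : ∑ i ∈ Finset.range (n + 1), f (n + 1 + i) * f (2 * n + 1 - (n + 1 + i)) =
      ∑ i ∈ Finset.range (n + 1), f i * f (2 * n + 1 - i) := by
    rw [← Finset.sum_range_reflect]
    refine Finset.sum_congr rfl fun i hi => ?_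
    have := Finset.mem_range.1 hi
    rw [mul_comm]
    congr 2 <;> omega
  rw [Finset.Nat.sum_antidiagonal_eq_sum_range_succ (fun i j => f i * f j),
    show (2 * n + 1).succ = (n + 1) + (n + 1) by omega, Finset.sum_range_add, hr]
  ring

/-- Folding a convolution at its middle, with an odd number of terms. -/
lemma sum_fold_even (f : ℕ → ℕ) (n : ℕ) :
    ∑ ij ∈ Finset.HasAntidiagonal.antidiagonal (2 * n), f ij.1 * f ij.2 =
      2 * ∑ i ∈ Finset.range n, f i * f (2 * n - i) + f n ^ 2 := by
  have hr : ∑ i ∈ Finset.range n, f (n + 1 + i) * f (2 * n - (n + 1 + i)) =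
      ∑ i ∈ Finset.range n, f i * f (2 * n - i) := by
    rw [← Finset.sum_range_reflect]
    refine Finset.sum_congr rfl fun i hi => ?_
    have := Finset.mem_range.1 hi
    rw [mul_comm]
    congr 2 <;> omega
  rw [Finset.Nat.sum_antidiagonal_eq_sum_range_succ (fun i j => f i * f j),
    show (2 * n).succ = (n + 1) + n by omega, Finset.sum_range_add, Finset.sum_range_succ, hr,
    show 2 * n - n = n by omega]
  ring

/-- The numbers of classes satisfy the recursion for `K`, by folding the convolution in
`two_mul_card_F_succ`. -/
lemma card_F (K : ℕ → ℕ)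
    (hK0 : K 0 = 1)
    (hKeven : ∀ n : ℕ, 1 ≤ n →
      K (2 * n) = 3 * ∑ i ∈ Finset.range n, K i * K (2 * n - 1 - i))
    (hKodd : ∀ n : ℕ,
      2 * K (2 * n + 1) =
        6 * ∑ i ∈ Finset.range n, K i * K (2 * n - i) + 3 * (K n) ^ 2 + K n)
    (k : ℕ) : (F k).card = K k := by
  induction k using Nat.strong_induction_on with
  | _ k ih =>
    cases k with
    | zero =>
      have : F 0 = {⟦T.leaf⟧} := Finset.coe_injective (by simp [F, S_zero])
      rw [this, hK0, Finset.card_singleton]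
    | succ k =>
      have h := two_mul_card_F_succ k
      have hs : ∑ ij ∈ Finset.HasAntidiagonal.antidiagonal k, (F ij.1).card * (F ij.2).card =
          ∑ ij ∈ Finset.HasAntidiagonal.antidiagonal k, K ij.1 * K ij.2 := by
        refine Finset.sum_congr rfl fun ij hij => ?_
        have := Finset.HasAntidiagonal.mem_antidiagonal.1 hij
        rw [ih ij.1 (by omega), ih ij.2 (by omega)]
      rw [hs] at h
      obtain ⟨n, rfl | rfl⟩ := Nat.even_or_odd' k
      · rw [card_diag_even, ih n (by omega), sum_fold_even] at h
        have := hKodd n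
        omega
      · rw [card_diag_odd, sum_fold_odd] at h
        have := hKeven (n + 1) (by omega)
        rw [show 2 * (n + 1) - 1 = 2 * n + 1 by omega] at this
        rw [show 2 * n + 1 + 1 = 2 * (n + 1) by ring] at h ⊢
        omega

/-- The quotient of the subtype of admissible trees with `k` saddles is the subset `S k` of the
quotient of all trees. -/
noncomputable def quotEquiv (k : ℕ) :
    Quot (fun t₁ t₂ : {t : T // Admissible t ∧ saddles t = k} => TEquiv t₁.1 t₂.1) ≃ S k :=
  Equiv.ofBijective
    (Quot.lift (fun t => ⟨⟦t.1⟧, t.2⟩) fun _ _ h => Subtype.ext (Quotient.sound h))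
    ⟨by
      rintro ⟨t⟩ ⟨u⟩ h
      exact Quot.sound (Quotient.exact (congrArg Subtype.val h)), by
      rintro ⟨⟨t⟩, h⟩
      exact ⟨Quot.mk _ ⟨t, h⟩, rfl⟩⟩

/-- The paper's Theorem 3: if `K : ℕ → ℕ` satisfies the recursion `K 0 = 1`,
`K (2n) = 3 * ∑_{i=0}^{n-1} K i * K (2n-1-i)` for `n ≥ 1`, and
`2 * K (2n+1) = 6 * ∑_{i=0}^{n-1} K i * K (2n-i) + 3 * (K n)^2 + K n`,
then for every `k` the set of `TEquiv`-classes of admissible trees with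
saddle number `k` is finite of cardinality `K k`. -/
theorem card_reeb_classes (K : ℕ → ℕ)
    (hK0 : K 0 = 1)
    (hKeven : ∀ n : ℕ, 1 ≤ n →
      K (2 * n) = 3 * ∑ i ∈ Finset.range n, K i * K (2 * n - 1 - i))
    (hKodd : ∀ n : ℕ,
      2 * K (2 * n + 1) =
        6 * ∑ i ∈ Finset.range n, K i * K (2 * n - i) + 3 * (K n) ^ 2 + K n)
    (k : ℕ) :
    Finite (Quot (fun t₁ t₂ : {t : T // Admissible t ∧ saddles t = k} =>
      TEquiv t₁.1 t₂.1)) ∧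
    Nat.card (Quot (fun t₁ t₂ : {t : T // Admissible t ∧ saddles t = k} =>
      TEquiv t₁.1 t₂.1)) = K k := by
  have : Finite (S k) := S_finite k
  refine ⟨Finite.of_equiv _ (quotEquiv k).symm, ?_⟩
  rw [Nat.card_congr (quotEquiv k), Nat.card_coe_set_eq, Set.ncard_eq_toFinset_card _ (S_finite k)]
  exact card_F K hK0 hKeven hKodd k
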